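/- For the linear Fokker–Planck operator L f = Δ_v f + (1/4)(2d − |v|²) f on L²_v(ℝ^d), there exists a constant λ₀ > 0 such that −⟨L f, f⟩ ≥ λ₀ |{I − P₀} f|²_μ for all suitable f, where P₀ f = a^f √M with a^f = ⟨√M, f⟩. -/

import Mathlib

open MeasureTheory Real RealInnerProductSpace

noncomputable section

/-- `Ed d` is Euclidean space `ℝ^d`. -/
abbrev Ed (d : ℕ) := EuclideanSpace ℝ (Fin d)

/-- The global Maxwellian `M(v) = (2π)^{-d/2} exp(-|v|²/2)`. -/
def maxw (d : ℕ) (v : Ed d) : ℝ := (2 * π) ^ (-(d : ℝ) / 2) * Real.exp (-‖v‖ ^ 2 / 2)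

/-- `√M`. -/
def sqrtM (d : ℕ) (v : Ed d) : ℝ := Real.sqrt (maxw d v)

/-- macroscopic density `a(x) = ∫ √M f dv`. -/
def macroA (d : ℕ) (f : Ed d → Ed d → ℝ) (x : Ed d) : ℝ := ∫ v : Ed d, sqrtM d v * f x v

/-- macroscopic momentum `b(x) = ∫ v √M f dv`. -/
def macroB (d : ℕ) (f : Ed d → Ed d → ℝ) (x : Ed d) : Ed d :=
  ∫ v : Ed d, (sqrtM d v * f x v) • v

/-- local averaged velocity `u_F = b/(1+a)`. -/
def uF (d : ℕ) (f : Ed d → Ed d → ℝ) (x : Ed d) : Ed d :=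
  (1 + macroA d f x)⁻¹ • macroB d f x

/-- the projection `P f = (a + b·v)√M`. -/
def projP (d : ℕ) (f : Ed d → Ed d → ℝ) (x v : Ed d) : ℝ :=
  (macroA d f x + ⟪macroB d f x, v⟫) * sqrtM d v

/-- the microscopic part `{I - P} f`. -/
def IminusP (d : ℕ) (f : Ed d → Ed d → ℝ) : Ed d → Ed d → ℝ :=
  fun x v => f x v - projP d f x v

/-- Laplacian in the velocity variable. -/
def lapv (d : ℕ) (g : Ed d → ℝ) (v : Ed d) : ℝ :=
  ∑ i : Fin d,
    fderiv ℝ (fun w => fderiv ℝ g w (EuclideanSpace.single i 1)) v (EuclideanSpace.single i 1)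

/-- the linear Fokker–Planck operator `L g = Δ_v g + (1/4)(2d - |v|²) g`. -/
def fpL (d : ℕ) (g : Ed d → ℝ) (v : Ed d) : ℝ :=
  lapv d g v + (1 / 4) * (2 * (d : ℝ) - ‖v‖ ^ 2) * g v

/-- the nonlinear term `Γ = u·((1/2) v f + v √M)` evaluated pointwise. -/
def gammaTerm (d : ℕ) (u : Ed d) (fv : ℝ) (v : Ed d) : ℝ :=
  ⟪u, ((1 / 2) * fv) • v + sqrtM d v • v⟫

/-- `f` solves at time `t` the equation linearized along `fb`:
`∂_t f + v·∇_x f + u_{F̄}·∇_v f = L f + Γ(f̄,f)`. -/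
def SolvesLin (d : ℕ) (fb f : ℝ → Ed d → Ed d → ℝ) (t : ℝ) : Prop :=
  ∀ x v : Ed d,
    deriv (fun τ => f τ x v) t
      + fderiv ℝ (fun y => f t y v) x v
      + fderiv ℝ (fun w => f t x w) v (uF d (fb t) x)
    = fpL d (fun w => f t x w) v + gammaTerm d (uF d (fb t) x) (f t x v) v

/-- `f` solves the perturbed Vlasov–Fokker–Planck equation at time `t`. -/
def SolvesVFP (d : ℕ) (f : ℝ → Ed d → Ed d → ℝ) (t : ℝ) : Prop :=
  SolvesLin d f f t

/-- regularity part of being a classical solution on `[0,T]`. -/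
def ClassicalReg (d : ℕ) (f : ℝ → Ed d → Ed d → ℝ) (T : ℝ) : Prop :=
  ContinuousOn (fun p : ℝ × Ed d × Ed d => f p.1 p.2.1 p.2.2) {p | p.1 ∈ Set.Icc 0 T} ∧
  (∀ t ∈ Set.Icc (0 : ℝ) T, ContDiff ℝ 2 (fun p : Ed d × Ed d => f t p.1 p.2)) ∧
  (∀ x v : Ed d, ∀ t ∈ Set.Ioo (0 : ℝ) T, DifferentiableAt ℝ (fun τ => f τ x v) t)

/-- classical solution of the nonlinear equation on `[0,T]`. -/
def IsClassicalSolutionOn (d : ℕ) (f : ℝ → Ed d → Ed d → ℝ) (T : ℝ) : Prop :=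
  ClassicalReg d f T ∧ ∀ t ∈ Set.Ioo (0 : ℝ) T, SolvesVFP d f t

/-- regularity part of being a global classical solution. -/
def GlobalClassicalReg (d : ℕ) (f : ℝ → Ed d → Ed d → ℝ) : Prop :=
  ContinuousOn (fun p : ℝ × Ed d × Ed d => f p.1 p.2.1 p.2.2) {p | 0 ≤ p.1} ∧
  (∀ t : ℝ, 0 ≤ t → ContDiff ℝ 2 (fun p : Ed d × Ed d => f t p.1 p.2)) ∧
  (∀ x v : Ed d, ∀ t : ℝ, 0 < t → DifferentiableAt ℝ (fun τ => f τ x v) t)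

/-- global-in-time classical solution of the nonlinear equation. -/
def IsGlobalClassicalSolution (d : ℕ) (f : ℝ → Ed d → Ed d → ℝ) : Prop :=
  GlobalClassicalReg d f ∧ ∀ t : ℝ, 0 < t → SolvesVFP d f t

/-- squared Sobolev norm `‖g‖²_{H^s}` in the variables `(x,v)`. -/
def hsNormSq (d s : ℕ) (g : Ed d → Ed d → ℝ) : ℝ :=
  ∑ k ∈ Finset.range (s + 1),
    ∫ z : Ed d × Ed d, ‖iteratedFDeriv ℝ k (fun p : Ed d × Ed d => g p.1 p.2) z‖ ^ 2

/-- squared `L²_x` norm of the `k`-th spatial derivative of `g`. -/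
def xDerivL2Sq {X : Type*} [NormedAddCommGroup X] [NormedSpace ℝ X] (d : ℕ) (k : ℕ)
    (g : Ed d → X) : ℝ := ∫ x : Ed d, ‖iteratedFDeriv ℝ k g x‖ ^ 2

/-- `‖∇_x(a,b)‖²_{H^{s-1}}`. -/
def gradABNormSq (d s : ℕ) (g : Ed d → Ed d → ℝ) : ℝ :=
  ∑ k ∈ Finset.Icc 1 s, (xDerivL2Sq d k (macroA d g) + xDerivL2Sq d k (macroB d g))

/-- the mixed derivative `∇_x^k ∇_v^l g`. -/
def mixedDeriv (d k l : ℕ) (g : Ed d → Ed d → ℝ) (x v : Ed d) :=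
  iteratedFDeriv ℝ k (fun y => iteratedFDeriv ℝ l (fun w => g y w) v) x

/-- squared `L²_{x,v}` norm of `∇_x^k ∇_v^l g`. -/
def mixedL2Sq (d k l : ℕ) (g : Ed d → Ed d → ℝ) : ℝ :=
  ∫ x : Ed d, ∫ v : Ed d, ‖mixedDeriv d k l g x v‖ ^ 2

/-- squared weighted norm `‖∇_x^k ∇_v^l g‖²_μ`. -/
def mixedMuNormSq (d k l : ℕ) (g : Ed d → Ed d → ℝ) : ℝ :=
  ∫ x : Ed d, ∫ v : Ed d,
    (‖fderiv ℝ (fun w => mixedDeriv d k l g x w) v‖ ^ 2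
      + (1 + ‖v‖ ^ 2) * ‖mixedDeriv d k l g x v‖ ^ 2)

/-- `‖g‖²_{L²_v(H^s_x)}`. -/
def l2vHsSq (d s : ℕ) (g : Ed d → Ed d → ℝ) : ℝ :=
  ∑ k ∈ Finset.range (s + 1), mixedL2Sq d k 0 g

/-- `‖g‖²_{L²_v(L¹_x)}`. -/
def l2vL1Sq (d : ℕ) (g : Ed d → Ed d → ℝ) : ℝ :=
  ∫ v : Ed d, (∫ x : Ed d, |g x v|) ^ 2

/-- plain squared `L²_{x,v}` norm. -/
def l2Sq (d : ℕ) (g : Ed d → Ed d → ℝ) : ℝ :=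
  ∫ x : Ed d, ∫ v : Ed d, (g x v) ^ 2

/-- the moment functional `A_{ij}(g)(x) = ⟨(v_i v_j - 1)√M, g(x,·)⟩`. -/
def Aij (d : ℕ) (i j : Fin d) (g : Ed d → Ed d → ℝ) (x : Ed d) : ℝ :=
  ∫ v : Ed d, (v i * v j - 1) * sqrtM d v * g x v

/-- squared weighted norm `|g|²_μ = ∫ (|∇_v g|² + (1+|v|²)|g|²) dv` in velocity only. -/
def muNormSqV (d : ℕ) (g : Ed d → ℝ) : ℝ :=
  ∫ v : Ed d, (‖fderiv ℝ g v‖ ^ 2 + (1 + ‖v‖ ^ 2) * (g v) ^ 2)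

/-- `a^f = ⟨√M, f⟩`. -/
def aFv (d : ℕ) (g : Ed d → ℝ) : ℝ := ∫ v : Ed d, sqrtM d v * g v

/-- `{I - P₀} g` for a function of the velocity only, `P₀ g = a^g √M`. -/
def IminusP0v (d : ℕ) (g : Ed d → ℝ) (v : Ed d) : ℝ :=
  g v - aFv d g * sqrtM d v

/-! Write `γ = M dv` for the standard Gaussian measure and `h = f / √M`. Since `(∇ + v/2) √M = 0`,
both `f` and `g = {I - P₀} f` have the same image under the annihilation operator `∇ + v/2`, namely
`√M ∇h`, and integration by parts gives `-⟨L f, f⟩ = ∫ |(∇ + v/2) f|² dv = ∫ |∇h|² dγ`, while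
`∫ g² dv = Var_γ h`. The Gaussian Poincaré inequality bounds `Var_γ h` by `π²/8 ∫ |∇h|² dγ`:
integrate `d/dt h(x cos t + y sin t)` over `0 ≤ t ≤ π/2`, square, and use that `γ ⊗ γ` is rotation
invariant. Finally `|g|²_μ ≤ 4 ∫ |(∇ + v/2) g|² dv + (2d + 1) ∫ g² dv`, by expanding the square and
integrating by parts. Hence `λ₀ = (4 + (2d + 1) π²/8)⁻¹` works. -/

open ProbabilityTheory

section GaussianPoincare

theorem sq_intervalIntegral_le {a b : ℝ} (hab : a ≤ b) {u : ℝ → ℝ}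
    (hu : IntervalIntegrable u volume a b)
    (hu2 : IntervalIntegrable (fun t ↦ u t ^ 2) volume a b) :
    (∫ t in a..b, u t) ^ 2 ≤ (b - a) * ∫ t in a..b, u t ^ 2 := by
  obtain rfl | hlt := hab.eq_or_lt
  · simp
  have jensen : (⨍ t in a..b, u t) ^ 2 ≤ ⨍ t in a..b, u t ^ 2 := by
    rw [intervalIntegrable_iff] at hu hu2
    exact even_two.convexOn_pow.map_set_average_le (by fun_prop) isClosed_univ
      (by simp [Set.uIoc_of_le hab, hlt]) (by simp [Set.uIoc_of_le hab]) (by simp) hu hu2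
  rw [interval_average_eq, interval_average_eq, smul_eq_mul, smul_eq_mul] at jensen
  calc (∫ t in a..b, u t) ^ 2
      = (b - a) ^ 2 * ((b - a)⁻¹ * ∫ t in a..b, u t) ^ 2 := by field_simp
    _ ≤ (b - a) ^ 2 * ((b - a)⁻¹ * ∫ t in a..b, u t ^ 2) := by gcongr
    _ = (b - a) * ∫ t in a..b, u t ^ 2 := by field_simp

section Averaging

variable {T Ω : Type*} [MeasurableSpace T] [MeasurableSpace Ω] {ν : Measure T} [IsFiniteMeasure ν]
  {ρ : Measure Ω} [SFinite ρ] {Φ : T → Ω → Ω} {F : Ω → ℝ}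

theorem integrable_prod_comp_measurePreserving (hΦ : Measurable (Function.uncurry Φ))
    (hρ : ∀ t, MeasurePreserving (Φ t) ρ ρ) (hF : Integrable F ρ) :
    Integrable (fun p : T × Ω ↦ F (Φ p.1 p.2)) (ν.prod ρ) :=
  ((MeasurePreserving.id ν).skew_product hΦ (.of_forall fun t ↦ (hρ t).map_eq)
    ).integrable_comp_of_integrable (hF.comp_snd ν)

theorem integral_integral_comp_measurePreserving (hΦ : Measurable (Function.uncurry Φ))
    (hρ : ∀ t, MeasurePreserving (Φ t) ρ ρ) (hF : Integrable F ρ) :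
    ∫ z, ∫ t, F (Φ t z) ∂ν ∂ρ = ν.real Set.univ * ∫ z, F z ∂ρ := by
  have hskew := (MeasurePreserving.id ν).skew_product hΦ (.of_forall fun t ↦ (hρ t).map_eq)
  calc ∫ z, ∫ t, F (Φ t z) ∂ν ∂ρ
      = ∫ p : T × Ω, F (Φ p.1 p.2) ∂ν.prod ρ :=
        (integral_prod_symm (fun p : T × Ω ↦ F (Φ p.1 p.2))
          (integrable_prod_comp_measurePreserving hΦ hρ hF)).symm
    _ = ∫ p : T × Ω, F p.2 ∂ν.prod ρ := by
        have hF' : AEStronglyMeasurable (fun p : T × Ω ↦ F p.2)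
            ((ν.prod ρ).map fun p ↦ (id p.1, Φ p.1 p.2)) := by
          rw [hskew.map_eq]
          exact (hF.comp_snd ν).aestronglyMeasurable
        rw [← integral_map hskew.aemeasurable hF', hskew.map_eq]
    _ = ν.real Set.univ * ∫ z, F z ∂ρ := by rw [integral_fun_snd F, smul_eq_mul]

end Averaging

theorem integral_prod_sub_sq {Ω : Type*} [MeasurableSpace Ω] {μ : Measure Ω}
    [IsProbabilityMeasure μ] {X : Ω → ℝ} (hX : MemLp X 2 μ) :
    ∫ z : Ω × Ω, (X z.2 - X z.1) ^ 2 ∂μ.prod μ = 2 * Var[X; μ] := by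
  have hX1 : Integrable X μ := hX.integrable one_le_two
  have hX2 : Integrable (fun x ↦ X x ^ 2) μ := hX.integrable_sq
  have expand (z : Ω × Ω) : (X z.2 - X z.1) ^ 2 = X z.2 ^ 2 + X z.1 ^ 2 - 2 * (X z.1 * X z.2) := by
    ring
  have hsum : Integrable (fun z : Ω × Ω ↦ X z.2 ^ 2 + X z.1 ^ 2) (μ.prod μ) :=
    (hX2.comp_snd μ).add (hX2.comp_fst μ)
  simp_rw [expand]
  rw [integral_sub hsum ((hX1.mul_prod hX1).const_mul 2),
    integral_add (hX2.comp_snd μ) (hX2.comp_fst μ), integral_const_mul, integral_prod_mul,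
    integral_fun_snd (fun x ↦ X x ^ 2), integral_fun_fst (fun x ↦ X x ^ 2), variance_eq_sub hX]
  simp only [probReal_univ, one_smul, Pi.pow_apply]
  ring

section Banach

variable {E : Type*} [NormedAddCommGroup E] [NormedSpace ℝ E] {h : E → ℝ}

theorem hasDerivAt_comp_fst_rotation (hh : Differentiable ℝ h) (z : E × E) (t : ℝ) :
    HasDerivAt (fun s ↦ h (ContinuousLinearMap.rotation s z).1)
      (fderiv ℝ h (ContinuousLinearMap.rotation t z).1 (ContinuousLinearMap.rotation t z).2) t :=
  (hh _).hasFDerivAt.comp_hasDerivAt t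
    (((hasDerivAt_cos t).smul_const z.1).add ((hasDerivAt_sin t).smul_const z.2))

theorem continuous_rotation_uncurry :
    Continuous fun p : ℝ × (E × E) ↦ ContinuousLinearMap.rotation p.1 p.2 := by
  simp only [ContinuousLinearMap.rotation_apply]
  fun_prop

theorem continuous_fderiv_comp_rotation (hh : ContDiff ℝ 1 h) (z : E × E) :
    Continuous fun t : ℝ ↦
      fderiv ℝ h (ContinuousLinearMap.rotation t z).1 (ContinuousLinearMap.rotation t z).2 := by
  have hrot : Continuous fun t : ℝ ↦ ContinuousLinearMap.rotation t z :=
    continuous_rotation_uncurry.comp (f := fun t : ℝ ↦ (t, z)) (by fun_prop)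
  exact ((hh.continuous_fderiv one_ne_zero).comp hrot.fst).clm_apply hrot.snd

theorem sub_sq_le_intervalIntegral_fderiv_rotation (hh : ContDiff ℝ 1 h) (z : E × E) :
    (h z.2 - h z.1) ^ 2 ≤ π / 2 * ∫ t in (0)..(π / 2),
      fderiv ℝ h (ContinuousLinearMap.rotation t z).1 (ContinuousLinearMap.rotation t z).2 ^ 2 := by
  set u : ℝ → ℝ := fun t ↦
    fderiv ℝ h (ContinuousLinearMap.rotation t z).1 (ContinuousLinearMap.rotation t z).2
  have hu : Continuous u := continuous_fderiv_comp_rotation hh z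
  have ftc : ∫ t in (0)..(π / 2), u t = h z.2 - h z.1 := by
    rw [intervalIntegral.integral_eq_sub_of_hasDerivAt
      (fun t _ ↦ hasDerivAt_comp_fst_rotation (hh.differentiable one_ne_zero) z t)
      (hu.intervalIntegrable _ _)]
    simp [ContinuousLinearMap.rotation_apply]
  simpa only [ftc, sub_zero] using sq_intervalIntegral_le (by positivity)
    (hu.intervalIntegrable 0 (π / 2)) ((hu.pow 2).intervalIntegrable 0 (π / 2))

variable [CompleteSpace E] [SecondCountableTopology E] [MeasurableSpace E] [BorelSpace E]

theorem variance_le_integral_prod_fderiv_sq {μ : Measure E} [IsGaussian μ] (hμ : μ[id] = 0)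
    (hh : ContDiff ℝ 1 h) (hL2 : MemLp h 2 μ)
    (hdL2 : MemLp (fun z : E × E ↦ fderiv ℝ h z.1 z.2) 2 (μ.prod μ)) :
    Var[h; μ] ≤ π ^ 2 / 8 * ∫ z : E × E, fderiv ℝ h z.1 z.2 ^ 2 ∂μ.prod μ := by
  set F : E × E → ℝ := fun z ↦ fderiv ℝ h z.1 z.2 ^ 2
  set ν : Measure ℝ := volume.restrict (Set.Ioc 0 (π / 2)) with hν
  have hrot (t : ℝ) : MeasurePreserving (ContinuousLinearMap.rotation t) (μ.prod μ) (μ.prod μ) :=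
    ⟨by fun_prop, IsGaussian.map_rotation_eq_self hμ t⟩
  have hmeas := (continuous_rotation_uncurry (E := E)).measurable
  have hF : Integrable F (μ.prod μ) := hdL2.integrable_sq
  have hint : Integrable (fun z ↦ ∫ t, F (ContinuousLinearMap.rotation t z) ∂ν) (μ.prod μ) :=
    (integrable_prod_comp_measurePreserving hmeas hrot hF).integral_prod_right
  have hdiff : Integrable (fun z : E × E ↦ (h z.2 - h z.1) ^ 2) (μ.prod μ) :=
    ((hL2.comp_snd μ).sub (hL2.comp_fst μ)).integrable_sq
  have hνuniv : ν.real Set.univ = π / 2 := by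
    simpa [ν] using pi_div_two_pos.le
  have pointwise (z : E × E) :
      (h z.2 - h z.1) ^ 2 ≤ π / 2 * ∫ t, F (ContinuousLinearMap.rotation t z) ∂ν := by
    rw [hν, ← intervalIntegral.integral_of_le (by positivity)]
    exact sub_sq_le_intervalIntegral_fderiv_rotation hh z
  have key : 2 * Var[h; μ] ≤ π / 2 * (π / 2 * ∫ z, F z ∂μ.prod μ) :=
    calc 2 * Var[h; μ] = ∫ z : E × E, (h z.2 - h z.1) ^ 2 ∂μ.prod μ :=
          (integral_prod_sub_sq hL2).symm
      _ ≤ ∫ z, π / 2 * ∫ t, F (ContinuousLinearMap.rotation t z) ∂ν ∂μ.prod μ :=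
          integral_mono hdiff (hint.const_mul _) pointwise
      _ = π / 2 * (π / 2 * ∫ z, F z ∂μ.prod μ) := by
          rw [integral_const_mul, integral_integral_comp_measurePreserving hmeas hrot hF, hνuniv]
  linarith

end Banach

theorem variance_stdGaussian_le_integral_norm_fderiv_sq {E : Type*} [NormedAddCommGroup E]
    [InnerProductSpace ℝ E] [FiniteDimensional ℝ E] [MeasurableSpace E] [BorelSpace E] {h : E → ℝ}
    (hh : ContDiff ℝ 1 h) (hL2 : MemLp h 2 (stdGaussian E))
    (hdL2 : MemLp (fderiv ℝ h) 2 (stdGaussian E)) :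
    Var[h; stdGaussian E] ≤ π ^ 2 / 8 * ∫ x, ‖fderiv ℝ h x‖ ^ 2 ∂stdGaussian E := by
  have second_moment (L : StrongDual ℝ E) : ∫ y, L y ^ 2 ∂stdGaussian E = ‖L‖ ^ 2 := by
    rw [← variance_dual_stdGaussian, variance_of_integral_eq_zero (by fun_prop)
      (integral_strongDual_stdGaussian L)]
  have hprod : MemLp (fun z : E × E ↦ fderiv ℝ h z.1 z.2) 2
      ((stdGaussian E).prod (stdGaussian E)) := by
    have hcont : Continuous fun z : E × E ↦ fderiv ℝ h z.1 z.2 :=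
      hh.continuous_fderiv_apply one_ne_zero
    have hid : Integrable (fun y : E ↦ ‖y‖ ^ 2) (stdGaussian E) :=
      IsGaussian.memLp_two_id.integrable_norm_pow two_ne_zero
    refine (memLp_two_iff_integrable_sq hcont.aestronglyMeasurable).2 <|
      ((hdL2.integrable_norm_pow two_ne_zero).mul_prod hid).mono'
        (hcont.pow 2).aestronglyMeasurable (.of_forall fun z ↦ ?_)
    rw [norm_pow, ← mul_pow]
    gcongr
    exact (fderiv ℝ h z.1).le_opNorm z.2
  calc Var[h; stdGaussian E]
      ≤ π ^ 2 / 8 * ∫ z : E × E, fderiv ℝ h z.1 z.2 ^ 2 ∂(stdGaussian E).prod (stdGaussian E) :=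
        variance_le_integral_prod_fderiv_sq integral_id_stdGaussian hh hL2 hprod
    _ = π ^ 2 / 8 * ∫ x, ‖fderiv ℝ h x‖ ^ 2 ∂stdGaussian E := by
        rw [integral_prod _ hprod.integrable_sq]
        simp_rw [second_moment]

end GaussianPoincare

theorem memLp_fderiv_apply {E : Type*} [NormedAddCommGroup E] [NormedSpace ℝ E]
    [MeasurableSpace E] {μ : Measure E} {f : E → ℝ} {p : ENNReal} (hf : MemLp (fderiv ℝ f) p μ)
    (w : E) : MemLp (fun x ↦ fderiv ℝ f x w) p μ :=
  (ContinuousLinearMap.apply ℝ ℝ w).comp_memLp' hf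

theorem fderiv_sub_const_mul {E : Type*} [NormedAddCommGroup E] [NormedSpace ℝ E] {f g : E → ℝ}
    {v : E} (hf : DifferentiableAt ℝ f v) (hg : DifferentiableAt ℝ g v) (c : ℝ) :
    fderiv ℝ (fun w ↦ f w - c * g w) v = fderiv ℝ f v - c • fderiv ℝ g v := by
  rw [fderiv_fun_sub hf (hg.const_mul c), fderiv_const_mul hg]

section IntegrationByParts

variable {E : Type*} [NormedAddCommGroup E] [NormedSpace ℝ E] [FiniteDimensional ℝ E]
  [MeasurableSpace E] [BorelSpace E] {μ : Measure E} [μ.IsAddHaarMeasure]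

theorem integral_fderiv_apply_self {u : E → ℝ} (hu : ContDiff ℝ 1 u) (hint : Integrable u μ)
    (hxu : Integrable (fun x ↦ ‖x‖ * u x) μ) (hxdu : Integrable (fun x ↦ ‖x‖ * ‖fderiv ℝ u x‖) μ) :
    ∫ x, fderiv ℝ u x x ∂μ = -(Module.finrank ℝ E * ∫ x, u x ∂μ) := by
  let b := Module.finBasis ℝ E
  let ℓ (i : Fin (Module.finrank ℝ E)) : E →L[ℝ] ℝ := (b.coord i).toContinuousLinearMap
  have int_mul (i) : Integrable (fun x ↦ ℓ i x * u x) μ :=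
    (hxu.norm.const_mul ‖ℓ i‖).mono' (by fun_prop) (.of_forall fun x ↦ by
      simpa only [norm_mul, norm_norm, mul_assoc] using
        mul_le_mul_of_nonneg_right ((ℓ i).le_opNorm x) (norm_nonneg (u x)))
  have int_mul_fderiv (i) : Integrable (fun x ↦ ℓ i x * fderiv ℝ u x (b i)) μ :=
    (hxdu.const_mul (‖ℓ i‖ * ‖b i‖)).mono' (by fun_prop) (.of_forall fun x ↦ by
      calc ‖ℓ i x * fderiv ℝ u x (b i)‖
          ≤ (‖ℓ i‖ * ‖x‖) * (‖fderiv ℝ u x‖ * ‖b i‖) := by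
            rw [norm_mul]
            gcongr <;> exact ContinuousLinearMap.le_opNorm _ _
        _ = ‖ℓ i‖ * ‖b i‖ * (‖x‖ * ‖fderiv ℝ u x‖) := by ring)
  have by_parts (i) : ∫ x, ℓ i x * fderiv ℝ u x (b i) ∂μ = -∫ x, u x ∂μ := by
    have hℓ : ℓ i (b i) = 1 := by simp [ℓ]
    rw [integral_mul_fderiv_eq_neg_fderiv_mul_of_integrable (by simpa [hℓ] using hint)
      (int_mul_fderiv i) (int_mul i) (fun x _ ↦ (ℓ i).differentiableAt)
      (fun x _ ↦ (hu.differentiable one_ne_zero) x)]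
    simp [hℓ]
  calc ∫ x, fderiv ℝ u x x ∂μ = ∫ x, ∑ i, ℓ i x * fderiv ℝ u x (b i) ∂μ := by
        congr with x
        conv_lhs => enter [2]; rw [← b.sum_repr x]
        simp only [map_sum, map_smul, smul_eq_mul]
        rfl
    _ = -(Module.finrank ℝ E * ∫ x, u x ∂μ) := by
        rw [integral_finsetSum _ fun i _ ↦ int_mul_fderiv i]
        simp [by_parts]

theorem integral_fderiv_fderiv_apply_mul {f : E → ℝ} {w : E} (hf : ContDiff ℝ 2 f)
    (hL2 : MemLp f 2 μ) (hdL2 : MemLp (fun x ↦ fderiv ℝ f x w) 2 μ)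
    (hddL2 : MemLp (fun x ↦ fderiv ℝ (fun y ↦ fderiv ℝ f y w) x w) 2 μ) :
    ∫ x, fderiv ℝ (fun y ↦ fderiv ℝ f y w) x w * f x ∂μ = -∫ x, fderiv ℝ f x w ^ 2 ∂μ := by
  have hdf : Differentiable ℝ (fderiv ℝ f) :=
    (hf.fderiv_right (m := 1) le_rfl).differentiable one_ne_zero
  simp_rw [mul_comm _ (f _), sq]
  exact integral_mul_fderiv_eq_neg_fderiv_mul_of_integrable (hdL2.integrable_mul hdL2)
    (hL2.integrable_mul hddL2) (hL2.integrable_mul hdL2)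
    (fun x _ ↦ hf.differentiable two_ne_zero x)
    fun x _ ↦ (hdf x).clm_apply (differentiableAt_const w)

end IntegrationByParts

section Annihilation

variable {E : Type*} [NormedAddCommGroup E] [InnerProductSpace ℝ E]

/-- The annihilation operator `∇ + v/2` of the harmonic oscillator `-Δ + |v|²/4`, the gradient being
encoded as a linear functional. -/
def annihilation (f : E → ℝ) (v : E) : E →L[ℝ] ℝ := fderiv ℝ f v + (f v / 2) • innerSL ℝ v

theorem annihilation_sub_const_mul {f g : E → ℝ} {v : E} (hf : DifferentiableAt ℝ f v)
    (hg : DifferentiableAt ℝ g v) (c : ℝ) :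
    annihilation (fun w ↦ f w - c * g w) v = annihilation f v - c • annihilation g v := by
  ext w
  simp only [annihilation, fderiv_sub_const_mul hf hg, add_apply, sub_apply,
    smul_apply, smul_eq_mul]
  ring

variable [CompleteSpace E]

theorem norm_add_smul_innerSL_sq (L : E →L[ℝ] ℝ) (c : ℝ) (v : E) :
    ‖L + c • innerSL ℝ v‖ ^ 2 = ‖L‖ ^ 2 + 2 * c * L v + c ^ 2 * ‖v‖ ^ 2 := by
  obtain ⟨w, rfl⟩ := (InnerProductSpace.toDual ℝ E).surjective L
  have hsum : InnerProductSpace.toDual ℝ E w + c • innerSL ℝ v =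
      InnerProductSpace.toDual ℝ E (w + c • v) := by
    ext; simp
  rw [hsum, LinearIsometryEquiv.norm_map, LinearIsometryEquiv.norm_map, norm_add_sq_real,
    inner_smul_right, norm_smul, mul_pow, norm_eq_abs, sq_abs, InnerProductSpace.toDual_apply_apply]
  ring

end Annihilation

section WeightedSobolev

variable {E : Type*} [NormedAddCommGroup E] [InnerProductSpace ℝ E] [FiniteDimensional ℝ E]
  [MeasurableSpace E] [BorelSpace E] {f g : E → ℝ}

/-- The `C¹` functions whose weighted norm `|f|_μ` is finite. -/
structure MemWeightedSobolev (f : E → ℝ) : Prop where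
  contDiff : ContDiff ℝ 1 f
  memLp : MemLp f 2
  memLp_norm_mul : MemLp (fun v ↦ ‖v‖ * f v) 2
  memLp_fderiv : MemLp (fderiv ℝ f) 2

namespace MemWeightedSobolev

theorem sub_const_mul (hf : MemWeightedSobolev f) (hg : MemWeightedSobolev g) (c : ℝ) :
    MemWeightedSobolev fun v ↦ f v - c * g v where
  contDiff := hf.contDiff.sub (contDiff_const.mul hg.contDiff)
  memLp := hf.memLp.sub (hg.memLp.const_mul c)
  memLp_norm_mul :=
    (hf.memLp_norm_mul.sub (hg.memLp_norm_mul.const_mul c)).ae_eq <| .of_forall fun v ↦ by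
      simp only [Pi.sub_apply]
      ring
  memLp_fderiv :=
    (hf.memLp_fderiv.sub (hg.memLp_fderiv.const_smul c)).ae_eq <| .of_forall fun v ↦
      (fderiv_sub_const_mul (hf.contDiff.differentiable one_ne_zero v)
        (hg.contDiff.differentiable one_ne_zero v) c).symm

theorem memLp_annihilation (hf : MemWeightedSobolev f) : MemLp (annihilation f) 2 := by
  have hf_cont : Continuous f := hf.contDiff.continuous
  have hcont : Continuous fun v ↦ (f v / 2) • innerSL ℝ v :=
    (hf_cont.div_const 2).smul (innerSL ℝ).continuous
  have hmul : MemLp (fun v ↦ (f v / 2) • innerSL ℝ v) 2 :=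
    hf.memLp_norm_mul.of_le hcont.aestronglyMeasurable (.of_forall fun v ↦ by
      simp only [norm_smul, innerSL_apply_norm, norm_div, norm_mul, norm_norm, RCLike.norm_ofNat]
      nlinarith [norm_nonneg v, norm_nonneg (f v)])
  exact MemLp.add (f := fderiv ℝ f) (g := fun v ↦ (f v / 2) • innerSL ℝ v) hf.memLp_fderiv hmul

theorem integrable_norm_sq_mul_sq (hf : MemWeightedSobolev f) :
    Integrable fun v ↦ ‖v‖ ^ 2 * f v ^ 2 := by
  simpa only [mul_pow] using hf.memLp_norm_mul.integrable_sq

theorem integrable_norm_mul_mul_norm_fderiv (hf : MemWeightedSobolev f) :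
    Integrable fun v ↦ ‖v‖ * f v * ‖fderiv ℝ f v‖ :=
  hf.memLp_norm_mul.integrable_mul hf.memLp_fderiv.norm

theorem integrable_mul_fderiv_apply_self (hf : MemWeightedSobolev f) :
    Integrable fun v ↦ f v * fderiv ℝ f v v := by
  have hf_cont : Continuous f := hf.contDiff.continuous
  have hdf_cont : Continuous (fderiv ℝ f) := hf.contDiff.continuous_fderiv one_ne_zero
  refine hf.integrable_norm_mul_mul_norm_fderiv.mono (by fun_prop) (.of_forall fun v ↦ ?_)
  simp only [norm_mul, norm_norm]
  calc ‖f v‖ * ‖fderiv ℝ f v v‖ ≤ ‖f v‖ * (‖fderiv ℝ f v‖ * ‖v‖) := by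
        gcongr
        exact (fderiv ℝ f v).le_opNorm v
    _ = ‖v‖ * ‖f v‖ * ‖fderiv ℝ f v‖ := by ring

theorem integral_mul_fderiv_apply_self (hf : MemWeightedSobolev f) :
    ∫ v, f v * fderiv ℝ f v v = -(Module.finrank ℝ E / 2 * ∫ v, f v ^ 2) := by
  have hderiv (v : E) : fderiv ℝ (fun w ↦ f w ^ 2) v = (2 * f v) • fderiv ℝ f v := by
    rw [fderiv_fun_pow 2 (hf.contDiff.differentiable one_ne_zero v)]
    simp
  have hnorm : Integrable fun v ↦ ‖v‖ * ‖fderiv ℝ (fun w ↦ f w ^ 2) v‖ := by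
    refine (hf.integrable_norm_mul_mul_norm_fderiv.norm.const_mul 2).congr
      (.of_forall fun v ↦ ?_)
    simp only [hderiv, norm_smul, norm_mul, norm_norm, RCLike.norm_ofNat]
    ring
  have hsq : Integrable fun v ↦ ‖v‖ * f v ^ 2 :=
    (hf.memLp_norm_mul.integrable_mul hf.memLp).congr <| .of_forall fun v ↦ by
      simp only [Pi.mul_apply]
      ring
  have euler := integral_fderiv_apply_self (hf.contDiff.pow 2) hf.memLp.integrable_sq hsq hnorm
  simp_rw [hderiv, smul_apply, smul_eq_mul, mul_assoc] at euler
  rw [integral_const_mul] at euler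
  linarith

theorem integral_norm_annihilation_sq (hf : MemWeightedSobolev f) :
    ∫ v, ‖annihilation f v‖ ^ 2 = (∫ v, ‖fderiv ℝ f v‖ ^ 2)
      - Module.finrank ℝ E / 2 * (∫ v, f v ^ 2) + 1 / 4 * ∫ v, ‖v‖ ^ 2 * f v ^ 2 := by
  have hcross := hf.integrable_mul_fderiv_apply_self
  have hgrad : Integrable fun v ↦ ‖fderiv ℝ f v‖ ^ 2 :=
    hf.memLp_fderiv.integrable_norm_pow two_ne_zero
  have hweight := hf.integrable_norm_sq_mul_sq
  have expand (v : E) : ‖annihilation f v‖ ^ 2 =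
      ‖fderiv ℝ f v‖ ^ 2 + f v * fderiv ℝ f v v + 1 / 4 * (‖v‖ ^ 2 * f v ^ 2) := by
    rw [annihilation, norm_add_smul_innerSL_sq]
    ring
  simp_rw [expand]
  rw [integral_add (by exact hgrad.add hcross) (hweight.const_mul _), integral_add hgrad hcross,
    hf.integral_mul_fderiv_apply_self, integral_const_mul]
  ring

theorem integral_fderiv_sq_add_weight_le (hf : MemWeightedSobolev f) :
    ∫ v, (‖fderiv ℝ f v‖ ^ 2 + (1 + ‖v‖ ^ 2) * f v ^ 2) ≤
      4 * (∫ v, ‖annihilation f v‖ ^ 2) + (2 * Module.finrank ℝ E + 1) * ∫ v, f v ^ 2 := by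
  have hgrad : Integrable fun v ↦ ‖fderiv ℝ f v‖ ^ 2 :=
    hf.memLp_fderiv.integrable_norm_pow two_ne_zero
  have hsq : Integrable fun v ↦ f v ^ 2 := hf.memLp.integrable_sq
  have hweight := hf.integrable_norm_sq_mul_sq
  have hgrad_nonneg : 0 ≤ ∫ v, ‖fderiv ℝ f v‖ ^ 2 := integral_nonneg fun v ↦ sq_nonneg _
  simp_rw [one_add_mul]
  rw [integral_add hgrad (by exact hsq.add hweight), integral_add hsq hweight,
    hf.integral_norm_annihilation_sq]
  linarith

end MemWeightedSobolev

end WeightedSobolev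

section Density

variable (E : Type*) [NormedAddCommGroup E] [InnerProductSpace ℝ E] [FiniteDimensional ℝ E]
  [MeasurableSpace E] [BorelSpace E]

theorem integrable_exp_neg_norm_sq_div_two : Integrable fun v : E ↦ exp (-‖v‖ ^ 2 / 2) := by
  have hval := GaussianFourier.integral_rexp_neg_mul_sq_norm (V := E) (one_half_pos (α := ℝ))
  have hpos : 0 < (π / (1 / 2)) ^ ((Module.finrank ℝ E : ℝ) / 2) := by positivity
  refine (Integrable.of_integral_ne_zero (hval ▸ hpos.ne')).congr (.of_forall fun v ↦ ?_)
  ring_nf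

theorem stdGaussian_eq_withDensity : stdGaussian E = volume.withDensity fun v ↦
    ENNReal.ofReal ((2 * π) ^ (-(Module.finrank ℝ E : ℝ) / 2) * exp (-‖v‖ ^ 2 / 2)) := by
  set c : ℝ := (2 * π) ^ (-(Module.finrank ℝ E : ℝ) / 2) with hc
  have : IsFiniteMeasure (volume.withDensity fun v : E ↦
      ENNReal.ofReal (c * exp (-‖v‖ ^ 2 / 2))) :=
    isFiniteMeasure_withDensity_ofReal
      ((integrable_exp_neg_norm_sq_div_two E).const_mul c).hasFiniteIntegral
  have hnorm : (c : ℂ) * (π / (1 / 2)) ^ ((Module.finrank ℝ E : ℂ) / 2) = 1 := by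
    have h2π : (0 : ℝ) < 2 * π := by positivity
    rw [← Complex.ofReal_natCast, show (π / (1 / 2) : ℂ) = ((2 * π : ℝ) : ℂ) by push_cast; ring,
      ← Complex.ofReal_ofNat, ← Complex.ofReal_div, ← Complex.ofReal_cpow h2π.le,
      ← Complex.ofReal_mul, hc, ← rpow_add h2π]
    simp [neg_div]
  refine Measure.ext_of_charFun (funext fun t ↦ ?_)
  have integrand (v : E) : (ENNReal.ofReal (c * exp (-‖v‖ ^ 2 / 2))).toReal •
      Complex.exp (⟪v, t⟫ * Complex.I) =
        c * Complex.exp (-(1 / 2) * ‖v‖ ^ 2 + Complex.I * ⟪t, v⟫) := by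
    rw [ENNReal.toReal_ofReal (by positivity), Complex.real_smul, Complex.ofReal_mul,
      Complex.ofReal_exp, mul_assoc, ← Complex.exp_add, real_inner_comm]
    push_cast
    ring_nf
  rw [charFun_stdGaussian, charFun_apply, integral_withDensity_eq_integral_toReal_smul
    (by fun_prop) (.of_forall fun _ ↦ ENNReal.ofReal_lt_top)]
  simp_rw [integrand]
  rw [integral_const_mul, GaussianFourier.integral_cexp_neg_mul_sq_norm_add (by norm_num),
    ← mul_assoc, hnorm, one_mul, Complex.I_sq]
  ring_nf

end Density

section Maxwellian

variable {d : ℕ}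

theorem maxw_pos (v : Ed d) : 0 < maxw d v := by
  unfold maxw
  positivity

theorem sqrtM_pos (v : Ed d) : 0 < sqrtM d v := sqrt_pos.2 (maxw_pos v)

theorem sqrtM_sq (v : Ed d) : sqrtM d v ^ 2 = maxw d v := sq_sqrt (maxw_pos v).le

theorem contDiff_maxw {n : WithTop ℕ∞} : ContDiff ℝ n (maxw d) := by
  unfold maxw
  exact contDiff_const.mul ((contDiff_norm_sq ℝ).neg.div_const 2).exp

theorem contDiff_sqrtM {n : WithTop ℕ∞} : ContDiff ℝ n (sqrtM d) :=
  contDiff_maxw.sqrt fun v ↦ (maxw_pos v).ne'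

theorem measurable_ofReal_maxw : Measurable fun v ↦ ENNReal.ofReal (maxw d v) :=
  (contDiff_maxw.continuous (n := 0)).measurable.ennreal_ofReal

theorem continuous_inv_sqrtM : Continuous fun v ↦ (sqrtM d v)⁻¹ :=
  (contDiff_sqrtM.continuous (n := 0)).inv₀ fun v ↦ (sqrtM_pos v).ne'

theorem hasFDerivAt_maxw (v : Ed d) : HasFDerivAt (maxw d) (-maxw d v • innerSL ℝ v) v := by
  have hexp : HasFDerivAt (fun w : Ed d ↦ -‖w‖ ^ 2 / 2) (-innerSL ℝ v) v :=
    ((hasStrictFDerivAt_norm_sq v).hasFDerivAt.neg.mul_const (2⁻¹ : ℝ)).congr_fderiv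
      (by ext; simp)
  refine (hexp.exp.const_mul ((2 * π) ^ (-(d : ℝ) / 2))).congr_fderiv ?_
  rw [smul_neg, smul_neg, smul_smul, neg_smul, maxw]

theorem fderiv_sqrtM (v : Ed d) : fderiv ℝ (sqrtM d) v = -(sqrtM d v / 2) • innerSL ℝ v := by
  have hcoeff : 1 / (2 * sqrtM d v) * -maxw d v = -(sqrtM d v / 2) := by
    rw [← sqrtM_sq]
    field_simp
  rw [← hcoeff, mul_smul]
  exact ((hasFDerivAt_maxw v).sqrt (maxw_pos v).ne').fderiv

theorem annihilation_sqrtM (v : Ed d) : annihilation (sqrtM d) v = 0 := by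
  rw [annihilation, fderiv_sqrtM, neg_smul, neg_add_cancel]

theorem fderiv_inv_sqrtM_mul {f : Ed d → ℝ} {v : Ed d} (hf : DifferentiableAt ℝ f v) :
    fderiv ℝ (fun w ↦ (sqrtM d w)⁻¹ * f w) v = (sqrtM d v)⁻¹ • annihilation f v := by
  set h : Ed d → ℝ := fun w ↦ (sqrtM d w)⁻¹ * f w
  have hsqrtM : Differentiable ℝ (sqrtM d) := contDiff_sqrtM.differentiable one_ne_zero
  have hh : DifferentiableAt ℝ h v := ((hsqrtM v).inv (sqrtM_pos v).ne').mul hf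
  have hf_eq : f = fun w ↦ sqrtM d w * h w :=
    funext fun w ↦ (mul_inv_cancel_left₀ (sqrtM_pos w).ne' _).symm
  have product_rule : fderiv ℝ f v = sqrtM d v • fderiv ℝ h v - (f v / 2) • innerSL ℝ v := by
    conv_lhs => rw [hf_eq, fderiv_fun_mul (hsqrtM v) hh, fderiv_sqrtM]
    rw [congrFun hf_eq v, smul_smul, sub_eq_add_neg, ← neg_smul]
    ring_nf
  rw [annihilation, product_rule, sub_add_cancel, inv_smul_smul₀ (sqrtM_pos v).ne']

theorem stdGaussian_eq_withDensity_maxw :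
    stdGaussian (Ed d) = volume.withDensity fun v ↦ ENNReal.ofReal (maxw d v) := by
  simp only [stdGaussian_eq_withDensity, finrank_euclideanSpace_fin, maxw]

theorem integral_stdGaussian_eq (φ : Ed d → ℝ) :
    ∫ v, φ v ∂stdGaussian (Ed d) = ∫ v, maxw d v * φ v := by
  rw [stdGaussian_eq_withDensity_maxw, integral_withDensity_eq_integral_toReal_smul
    measurable_ofReal_maxw (.of_forall fun _ ↦ ENNReal.ofReal_lt_top)]
  simp only [ENNReal.toReal_ofReal (maxw_pos _).le, smul_eq_mul]

theorem integrable_stdGaussian_iff {φ : Ed d → ℝ} :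
    Integrable φ (stdGaussian (Ed d)) ↔ Integrable fun v ↦ maxw d v * φ v := by
  rw [stdGaussian_eq_withDensity_maxw, integrable_withDensity_iff_integrable_smul'
    measurable_ofReal_maxw (.of_forall fun _ ↦ ENNReal.ofReal_lt_top)]
  simp only [ENNReal.toReal_ofReal (maxw_pos _).le, smul_eq_mul]

theorem maxw_mul_norm_inv_sqrtM_smul_sq {F : Type*} [NormedAddCommGroup F] [NormedSpace ℝ F]
    (v : Ed d) (y : F) : maxw d v * ‖(sqrtM d v)⁻¹ • y‖ ^ 2 = ‖y‖ ^ 2 := by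
  have hpos := sqrtM_pos v
  rw [norm_smul, norm_inv, norm_of_nonneg hpos.le, ← sqrtM_sq]
  field_simp

theorem memLp_two_inv_sqrtM_smul {F : Type*} [NormedAddCommGroup F] [NormedSpace ℝ F]
    {u : Ed d → F} (hu : MemLp u 2) :
    MemLp (fun v ↦ (sqrtM d v)⁻¹ • u v) 2 (stdGaussian (Ed d)) := by
  have hac : stdGaussian (Ed d) ≪ volume :=
    stdGaussian_eq_withDensity_maxw ▸ withDensity_absolutelyContinuous _ _
  have hmeas : AEStronglyMeasurable (fun v ↦ (sqrtM d v)⁻¹ • u v) (stdGaussian (Ed d)) :=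
    continuous_inv_sqrtM.aestronglyMeasurable.smul (hu.aestronglyMeasurable.mono_ac hac)
  rw [memLp_two_iff_integrable_sq_norm hmeas, integrable_stdGaussian_iff]
  simpa only [maxw_mul_norm_inv_sqrtM_smul_sq] using hu.integrable_norm_pow two_ne_zero

theorem memWeightedSobolev_sqrtM : MemWeightedSobolev (sqrtM d) := by
  have hcont : Continuous (sqrtM d) := contDiff_sqrtM.continuous (n := 0)
  have memLp_mul : MemLp (fun v ↦ ‖v‖ * sqrtM d v) 2 := by
    have moment : Integrable (fun v : Ed d ↦ ‖v‖ ^ 2) (stdGaussian (Ed d)) :=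
      IsGaussian.memLp_two_id.integrable_norm_pow two_ne_zero
    rw [memLp_two_iff_integrable_sq (by fun_prop)]
    simpa only [mul_pow, sqrtM_sq, mul_comm] using integrable_stdGaussian_iff.1 moment
  refine ⟨contDiff_sqrtM, ?_, memLp_mul, ?_⟩
  · rw [memLp_two_iff_integrable_sq (by fun_prop)]
    simpa only [sqrtM_sq, mul_one] using integrable_stdGaussian_iff.1 (integrable_const (1 : ℝ))
  · have hderiv : Continuous (fderiv ℝ (sqrtM d)) := contDiff_sqrtM.continuous_fderiv one_ne_zero
    refine memLp_mul.of_le hderiv.aestronglyMeasurable (.of_forall fun v ↦ ?_)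
    rw [fderiv_sqrtM, norm_smul, norm_neg, norm_div, norm_mul, norm_norm, innerSL_apply_norm,
      RCLike.norm_ofNat]
    nlinarith [norm_nonneg v, norm_nonneg (sqrtM d v)]

theorem memWeightedSobolev_IminusP0v {f : Ed d → ℝ} (hf : MemWeightedSobolev f) :
    MemWeightedSobolev (IminusP0v d f) :=
  hf.sub_const_mul memWeightedSobolev_sqrtM _

theorem annihilation_IminusP0v {f : Ed d → ℝ} {v : Ed d} (hf : DifferentiableAt ℝ f v) :
    annihilation (IminusP0v d f) v = annihilation f v := by
  have hsub := annihilation_sub_const_mul hf (contDiff_sqrtM.differentiable one_ne_zero v)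
    (aFv d f)
  rwa [annihilation_sqrtM, smul_zero, sub_zero] at hsub

theorem variance_inv_sqrtM_mul {f : Ed d → ℝ} (hf : Continuous f) :
    Var[fun v ↦ (sqrtM d v)⁻¹ * f v; stdGaussian (Ed d)] = ∫ v, IminusP0v d f v ^ 2 := by
  have hcont : Continuous fun v ↦ (sqrtM d v)⁻¹ * f v := continuous_inv_sqrtM.mul hf
  have mean : ∫ v, (sqrtM d v)⁻¹ * f v ∂stdGaussian (Ed d) = aFv d f := by
    rw [integral_stdGaussian_eq, aFv]
    congr with v
    rw [← sqrtM_sq]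
    field_simp
  rw [variance_eq_integral hcont.aemeasurable, mean, integral_stdGaussian_eq]
  congr with v
  have hpos := sqrtM_pos v
  rw [← sqrtM_sq, IminusP0v]
  field_simp

theorem integral_IminusP0v_sq_le {f : Ed d → ℝ} (hf : MemWeightedSobolev f) :
    ∫ v, IminusP0v d f v ^ 2 ≤ π ^ 2 / 8 * ∫ v, ‖annihilation f v‖ ^ 2 := by
  set h : Ed d → ℝ := fun v ↦ (sqrtM d v)⁻¹ * f v
  have hh : ContDiff ℝ 1 h := (contDiff_sqrtM.inv fun v ↦ (sqrtM_pos v).ne').mul hf.contDiff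
  have hderiv : fderiv ℝ h = fun v ↦ (sqrtM d v)⁻¹ • annihilation f v :=
    funext fun v ↦ fderiv_inv_sqrtM_mul (hf.contDiff.differentiable one_ne_zero v)
  have hL2 : MemLp h 2 (stdGaussian (Ed d)) := memLp_two_inv_sqrtM_smul hf.memLp
  have hdL2 : MemLp (fderiv ℝ h) 2 (stdGaussian (Ed d)) := by
    rw [hderiv]
    exact memLp_two_inv_sqrtM_smul (F := Ed d →L[ℝ] ℝ) hf.memLp_annihilation
  calc ∫ v, IminusP0v d f v ^ 2 = Var[h; stdGaussian (Ed d)] :=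
        (variance_inv_sqrtM_mul hf.contDiff.continuous).symm
    _ ≤ π ^ 2 / 8 * ∫ v, ‖fderiv ℝ h v‖ ^ 2 ∂stdGaussian (Ed d) :=
        variance_stdGaussian_le_integral_norm_fderiv_sq hh hL2 hdL2
    _ = π ^ 2 / 8 * ∫ v, ‖annihilation f v‖ ^ 2 := by
        rw [integral_stdGaussian_eq, hderiv]
        congr 2 with v
        exact maxw_mul_norm_inv_sqrtM_smul_sq (F := Ed d →L[ℝ] ℝ) v (annihilation f v)

theorem muNormSqV_IminusP0v_le {f : Ed d → ℝ} (hf : MemWeightedSobolev f) :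
    muNormSqV d (IminusP0v d f) ≤
      (4 + (2 * d + 1) * (π ^ 2 / 8)) * ∫ v, ‖annihilation f v‖ ^ 2 := by
  have hf_diff := hf.contDiff.differentiable one_ne_zero
  calc muNormSqV d (IminusP0v d f)
      ≤ 4 * (∫ v, ‖annihilation (IminusP0v d f) v‖ ^ 2) +
          (2 * d + 1) * ∫ v, IminusP0v d f v ^ 2 := by
        simpa only [muNormSqV, finrank_euclideanSpace_fin] using
          (memWeightedSobolev_IminusP0v hf).integral_fderiv_sq_add_weight_le
    _ = 4 * (∫ v, ‖annihilation f v‖ ^ 2) + (2 * d + 1) * ∫ v, IminusP0v d f v ^ 2 := by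
        simp only [annihilation_IminusP0v (hf_diff _)]
    _ ≤ 4 * (∫ v, ‖annihilation f v‖ ^ 2) +
          (2 * d + 1) * (π ^ 2 / 8 * ∫ v, ‖annihilation f v‖ ^ 2) := by
        gcongr
        exact integral_IminusP0v_sq_le hf
    _ = (4 + (2 * d + 1) * (π ^ 2 / 8)) * ∫ v, ‖annihilation f v‖ ^ 2 := by ring

end Maxwellian

section FokkerPlanck

variable {d : ℕ} {f : Ed d → ℝ}

theorem integrable_lapv_mul (hL2 : MemLp f 2)
    (hddL2 : ∀ i, MemLp (fun v ↦ fderiv ℝ (fun w ↦ fderiv ℝ f w (EuclideanSpace.single i 1)) v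
      (EuclideanSpace.single i 1)) 2) :
    Integrable fun v ↦ lapv d f v * f v := by
  simp_rw [lapv, Finset.sum_mul]
  exact integrable_finsetSum _ fun i _ ↦ (hddL2 i).integrable_mul hL2

theorem integral_lapv_mul (hf : ContDiff ℝ 2 f) (hL2 : MemLp f 2) (hdL2 : MemLp (fderiv ℝ f) 2)
    (hddL2 : ∀ i, MemLp (fun v ↦ fderiv ℝ (fun w ↦ fderiv ℝ f w (EuclideanSpace.single i 1)) v
      (EuclideanSpace.single i 1)) 2) :
    ∫ v, lapv d f v * f v = -∫ v, ‖fderiv ℝ f v‖ ^ 2 := by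
  have hdi (i : Fin d) : MemLp (fun v ↦ fderiv ℝ f v (EuclideanSpace.single i 1)) 2 :=
    memLp_fderiv_apply hdL2 _
  have norm_sq (v : Ed d) :
      ‖fderiv ℝ f v‖ ^ 2 = ∑ i, fderiv ℝ f v (EuclideanSpace.single i 1) ^ 2 := by
    simp [(EuclideanSpace.basisFun (Fin d) ℝ).norm_dual]
  simp_rw [norm_sq, lapv, Finset.sum_mul]
  rw [integral_finsetSum _ fun i _ ↦ by exact (hddL2 i).integrable_mul hL2,
    integral_finsetSum _ fun i _ ↦ (hdi i).integrable_sq, ← Finset.sum_neg_distrib]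
  exact Finset.sum_congr rfl fun i _ ↦
    integral_fderiv_fderiv_apply_mul hf hL2 (hdi i) (hddL2 i)

theorem neg_integral_fpL_mul (hf : ContDiff ℝ 2 f) (hμ : MemWeightedSobolev f)
    (hddL2 : ∀ i, MemLp (fun v ↦ fderiv ℝ (fun w ↦ fderiv ℝ f w (EuclideanSpace.single i 1)) v
      (EuclideanSpace.single i 1)) 2) :
    -∫ v, fpL d f v * f v = ∫ v, ‖annihilation f v‖ ^ 2 := by
  have hlap := integrable_lapv_mul hμ.memLp hddL2
  have hsq : Integrable fun v ↦ (d / 2 : ℝ) * f v ^ 2 := hμ.memLp.integrable_sq.const_mul _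
  have hweight := hμ.integrable_norm_sq_mul_sq.const_mul (1 / 4)
  have expand (v : Ed d) : fpL d f v * f v =
      lapv d f v * f v + (d / 2 * f v ^ 2 - 1 / 4 * (‖v‖ ^ 2 * f v ^ 2)) := by
    rw [fpL]
    ring
  simp_rw [expand]
  rw [integral_add hlap (by exact hsq.sub hweight), integral_sub hsq hweight,
    integral_lapv_mul hf hμ.memLp hμ.memLp_fderiv hddL2, hμ.integral_norm_annihilation_sq,
    integral_const_mul, integral_const_mul, finrank_euclideanSpace_fin]
  ring

theorem fokkerPlanck_coercivity_P0_general (hf : ContDiff ℝ 2 f) (hμ : MemWeightedSobolev f)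
    (hddL2 : ∀ i, MemLp (fun v ↦ fderiv ℝ (fun w ↦ fderiv ℝ f w (EuclideanSpace.single i 1)) v
      (EuclideanSpace.single i 1)) 2) :
    (4 + (2 * d + 1) * (π ^ 2 / 8))⁻¹ * muNormSqV d (IminusP0v d f) ≤
      -∫ v, fpL d f v * f v := by
  rw [neg_integral_fpL_mul hf hμ hddL2, inv_mul_le_iff₀ (by positivity)]
  exact muNormSqV_IminusP0v_le hμ

end FokkerPlanck

section Schwartz

variable {E : Type*} [NormedAddCommGroup E] [InnerProductSpace ℝ E] [FiniteDimensional ℝ E]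
  [MeasurableSpace E] [BorelSpace E]

theorem memWeightedSobolev_schwartzMap (f : SchwartzMap E ℝ) : MemWeightedSobolev f where
  contDiff := f.smooth 1
  memLp := f.memLp 2
  memLp_norm_mul := by
    rw [memLp_two_iff_integrable_sq (by fun_prop)]
    refine ((SchwartzMap.pairing (ContinuousLinearMap.mul ℝ ℝ) f f).integrable_pow_mul
      volume 2).congr (.of_forall fun v ↦ ?_)
    simp only [SchwartzMap.pairing_apply_apply, ContinuousLinearMap.mul_apply', mul_pow, ← sq,
      norm_pow, norm_eq_abs, sq_abs]
  memLp_fderiv := (SchwartzMap.fderivCLM ℝ E ℝ f).memLp 2 volume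

open LineDeriv in
theorem memLp_fderiv_fderiv_apply_schwartzMap (f : SchwartzMap E ℝ) (w : E) :
    MemLp (fun v ↦ fderiv ℝ (fun y ↦ fderiv ℝ f y w) v w) 2 :=
  (∂_{w} (∂_{w} f)).memLp 2 volume

end Schwartz

/-- Proposition 2.1 (iii).

There exists `λ₀ > 0` such that `-⟨L f, f⟩ ≥ λ₀ |{I - P₀} f|²_μ` for all suitable
(here: Schwartz) `f`, where `P₀ f = a^f √M` with `a^f = ⟨√M, f⟩`. -/
theorem fokkerPlanck_coercivity_P0 (d : ℕ) (hd : 1 ≤ d) :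
    ∃ lam0 > (0 : ℝ), ∀ f : SchwartzMap (Ed d) ℝ,
      - (∫ v : Ed d, fpL d (⇑f) v * f v)
        ≥ lam0 * muNormSqV d (IminusP0v d (⇑f)) :=
  ⟨(4 + (2 * d + 1) * (π ^ 2 / 8))⁻¹, by positivity, fun f ↦
    fokkerPlanck_coercivity_P0_general (f.smooth 2) (memWeightedSobolev_schwartzMap f)
      fun i ↦ memLp_fderiv_fderiv_apply_schwartzMap f (EuclideanSpace.single i 1)⟩
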